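/- Let k ≥ 1 be a real number, let a ∈ {0,1}, let X > 0, and let d be a real number with (k+1)/2 < d < k/2 + 1. Then the function t ↦ Γ(d+it)·Γ((k+a)/2 − d − it)/Γ((1+a−k)/2 + d + it) · X^{−(d+it)} is integrable on ℝ and (1/(2π)) ∫_{−∞}^{∞} Γ(d+it)·Γ((k+a)/2 − d − it)/Γ((1+a−k)/2 + d + it) · X^{−(d+it)} dt = (Γ((k+a)/2)/Γ(a + 1/2)) · X^{−(k+a)/2} · ( ₁F₁((k+a)/2; a + 1/2; −1/X) − 1 ). -/

import Mathlib

open Complex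

/-- The confluent hypergeometric series `₁F₁(α; β; z) = ∑_{j≥0} (α)_j/(β)_j · z^j/j!`,
where `(c)_j` is the rising factorial. -/
noncomputable def oneF1 (α β z : ℂ) : ℂ :=
  ∑' j : ℕ, ((ascPochhammer ℂ j).eval α / (ascPochhammer ℂ j).eval β) * z ^ j /
    (j.factorial : ℂ)

/-!
With `s = α - u` and `z = X⁻¹` the integral becomes the inverse Mellin transform of
`Γ(u) φ(-u)` at `z`, where `φ(v) = Γ(α + v) / Γ(β + v)` and `-1 < Re u < 0`. Ramanujan's master
formula evaluates it as `∑_{j ≥ 1} (-1)^j / j! * φ(j) * z^j`, without shifting contours to infinity.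
For `φ = 1` it is the Cahen–Mellin integral of `exp (-z) - 1`. The operator `b + z d/dz` multiplies
`φ(v)` by `b + v`, and the Euler beta integral multiplies it by `Γ(α + v) / Γ(α + γ + v)` when
`Re γ > 0`. Raising `β` by an integer, which is undone by linear factors, reaches every `φ` needed.
-/

section

open Filter MeasureTheory Set Topology

section MellinInv

theorem verticalIntegrable_comp_add_one {E : Type*} [NormedAddCommGroup E] {F : ℂ → E} {c : ℝ} :
    VerticalIntegrable (fun u ↦ F (u + 1)) c ↔ VerticalIntegrable F (c + 1) := by
  simp only [VerticalIntegrable, ofReal_add, ofReal_one, add_right_comm]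

variable {E : Type*} [NormedAddCommGroup E] [NormedSpace ℂ E] {c x : ℝ} {F G : ℂ → E}

theorem mellinInv_congr (h : ∀ t : ℝ, F (c + t * I) = G (c + t * I)) :
    mellinInv c F x = mellinInv c G x := by
  simp only [mellinInv, h]

theorem mellinInv_const_smul (b : ℂ) :
    mellinInv c (fun u ↦ b • F u) x = b • mellinInv c F x := by
  simp only [mellinInv, smul_comm _ b, integral_smul]

theorem norm_cpow_neg_vertical (hx : 0 < x) (t : ℝ) :
    ‖(x : ℂ) ^ (-(c + t * I) : ℂ)‖ = x ^ (-c) := by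
  simp [norm_cpow_eq_rpow_re_of_pos hx]

theorem integrable_cpow_neg_smul (hx : 0 < x) (hF : VerticalIntegrable F c) :
    Integrable fun t : ℝ ↦ (x : ℂ) ^ (-(c + t * I) : ℂ) • F (c + t * I) :=
  Integrable.bdd_smul hF _ (by fun_prop : Measurable _).aestronglyMeasurable
    (.of_forall fun t ↦ (norm_cpow_neg_vertical hx t).le)

theorem mellinInv_sub (hx : 0 < x) (hF : VerticalIntegrable F c) (hG : VerticalIntegrable G c) :
    mellinInv c (fun u ↦ F u - G u) x = mellinInv c F x - mellinInv c G x := by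
  simp only [mellinInv]
  rw [← smul_sub, ← integral_sub (integrable_cpow_neg_smul hx hF) (integrable_cpow_neg_smul hx hG)]
  simp only [smul_sub]

theorem mellinInv_comp_add_one (hx : 0 < x) :
    mellinInv c (fun u ↦ F (u + 1)) x = (x : ℂ) • mellinInv (c + 1) F x := by
  have hx₀ : (x : ℂ) ≠ 0 := mod_cast hx.ne'
  have key (t : ℝ) : (x : ℂ) ^ (-(c + t * I) : ℂ) • F (c + t * I + 1) =
      (x : ℂ) • ((x : ℂ) ^ (-((c + 1 : ℝ) + t * I) : ℂ) • F ((c + 1 : ℝ) + t * I)) := by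
    rw [show (((c + 1 : ℝ) : ℂ) + t * I) = c + t * I + 1 by push_cast; ring,
      show -(c + t * I + 1 : ℂ) = -(c + t * I) - 1 by ring, cpow_sub _ _ hx₀, cpow_one, smul_smul,
      mul_div_cancel₀ _ hx₀]
  simp only [mellinInv, key, integral_smul, smul_comm _ (x : ℂ)]

theorem hasDerivAt_mellinInv (hx : 0 < x) (hF : VerticalIntegrable F c)
    (hF' : VerticalIntegrable (fun u ↦ u • F u) c) :
    HasDerivAt (mellinInv c F) (-(x : ℂ)⁻¹ • mellinInv c (fun u ↦ u • F u) x) x := by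
  obtain ⟨M, hM⟩ := (isCompact_Icc (a := x / 2) (b := 2 * x)).exists_bound_of_continuousOn
    (f := fun y : ℝ ↦ y⁻¹ * y ^ (-c)) fun y hy ↦
      ((continuousAt_inv₀ (by linarith [hy.1])).mul
        (Real.continuousAt_rpow_const _ _ (.inl (by linarith [hy.1])))).continuousWithinAt
  have hpos {y : ℝ} (hy : y ∈ Icc (x / 2) (2 * x)) : 0 < y := by linarith [hy.1]
  have hderiv (t y : ℝ) (hy : y ∈ Icc (x / 2) (2 * x)) :
      HasDerivAt (fun y : ℝ ↦ (y : ℂ) ^ (-(c + t * I) : ℂ) • F (c + t * I))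
        (-(y : ℂ)⁻¹ • (y : ℂ) ^ (-(c + t * I) : ℂ) • (c + t * I) • F (c + t * I)) y := by
    have h := ((hasDerivAt_id (y : ℂ)).cpow_const (c := -(c + t * I))
      (ofReal_mem_slitPlane.2 (hpos hy))).comp_ofReal.smul_const (F (c + t * I))
    refine h.congr_deriv ?_
    rw [id, cpow_sub _ _ (ofReal_ne_zero.2 (hpos hy).ne'), cpow_one]
    module
  have hbound (t y : ℝ) (hy : y ∈ Icc (x / 2) (2 * x)) :
      ‖-(y : ℂ)⁻¹ • (y : ℂ) ^ (-(c + t * I) : ℂ) • (c + t * I) • F (c + t * I)‖ ≤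
        M * ‖(c + t * I) • F (c + t * I)‖ := by
    refine le_of_eq_of_le ?_ (mul_le_mul_of_nonneg_right (hM y hy) (norm_nonneg _))
    simp only [norm_smul, norm_mul, norm_neg, norm_inv, norm_real, norm_cpow_neg_vertical (hpos hy),
      Real.norm_of_nonneg (Real.rpow_nonneg (hpos hy).le _), mul_assoc]
  have h := (hasDerivAt_integral_of_dominated_loc_of_deriv_le
    (Icc_mem_nhds (by linarith) (by linarith))
    (eventually_gt_nhds hx |>.mono fun y hy ↦ (integrable_cpow_neg_smul hy hF).1)
    (integrable_cpow_neg_smul hx hF)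
    ((integrable_cpow_neg_smul hx hF').smul (-(x : ℂ)⁻¹)).1
    (.of_forall hbound) (hF'.norm.const_mul M) (.of_forall hderiv)).2.const_smul
      (1 / (2 * Real.pi))
  refine h.congr_deriv ?_
  rw [integral_smul, mellinInv, smul_comm]

theorem tendsto_mellinInv_nhdsGT_zero (hc : c < 0) :
    Tendsto (mellinInv c F) (𝓝[>] 0) (𝓝 0) := by
  have hbound : ∀ᶠ x : ℝ in 𝓝[>] 0,
      ‖mellinInv c F x‖ ≤ ‖1 / (2 * Real.pi)‖ * (x ^ (-c) * ∫ t : ℝ, ‖F (c + t * I)‖) := by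
    filter_upwards [self_mem_nhdsWithin] with x hx
    rw [mellinInv, norm_smul, ← integral_const_mul]
    gcongr
    refine (norm_integral_le_integral_norm _).trans_eq (integral_congr_ae (.of_forall fun t ↦ ?_))
    simp only [norm_smul, norm_cpow_neg_vertical hx]
  have hpow : Tendsto (fun x : ℝ ↦ x ^ (-c)) (𝓝[>] 0) (𝓝 0) := by
    have h := (Real.continuousAt_rpow_const 0 (-c) (.inr (by linarith))).tendsto
    rw [Real.zero_rpow (by linarith)] at h
    exact h.mono_left nhdsWithin_le_nhds
  exact squeeze_zero_norm' hbound (by simpa using (hpow.mul_const _).const_mul _)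

end MellinInv

section Gamma

variable {c x : ℝ}

theorem ne_neg_natCast_of_neg_one_lt_of_neg (hc : -1 < c) (hc' : c < 0) (m : ℕ) : c ≠ -m := by
  rcases m with _ | m
  · simpa using hc'.ne
  · push_cast; linarith [m.cast_nonneg (α := ℝ)]

theorem norm_Gamma_le_Gamma_re {s : ℂ} (hs : 0 < s.re) : ‖Gamma s‖ ≤ Real.Gamma s.re := by
  rw [Gamma_eq_integral hs, Real.Gamma_eq_integral hs, GammaIntegral]
  refine (norm_integral_le_integral_norm _).trans_eq
    (setIntegral_congr_fun measurableSet_Ioi fun t ht ↦ ?_)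
  rw [norm_mul, norm_cpow_eq_rpow_re_of_pos ht, norm_real, Real.norm_of_nonneg (Real.exp_nonneg _)]
  simp

theorem continuous_Gamma_comp {Y : Type*} [TopologicalSpace Y] {f : Y → ℂ} (hf : Continuous f)
    (hpole : ∀ y (m : ℕ), f y ≠ -m) : Continuous fun y ↦ Gamma (f y) :=
  continuous_iff_continuousAt.2 fun y ↦
    (continuousAt_Gamma (f y) (hpole y)).comp hf.continuousAt

theorem norm_Gamma_vertical_le (hc : 1 ≤ c) (t : ℝ) :
    ‖Gamma (c + t * I)‖ ≤ Real.Gamma (c + 2) * (1 + t ^ 2)⁻¹ := by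
  set s : ℂ := c + t * I
  have hre : s.re = c := by simp [s]
  have him : s.im = t := by simp [s]
  have hs₀ : s ≠ 0 := ne_of_apply_ne re (by rw [hre, zero_re]; positivity)
  have hs₁ : s + 1 ≠ 0 := ne_of_apply_ne re (by rw [add_re, hre, one_re, zero_re]; positivity)
  have hΓ : ‖s + 1‖ * (‖s‖ * ‖Gamma s‖) ≤ Real.Gamma (c + 2) := by
    have h := norm_Gamma_le_Gamma_re (s := s + 2) (by rw [add_re, hre, re_ofNat]; positivity)
    rwa [show s + 2 = s + 1 + 1 by ring, Gamma_add_one _ hs₁, Gamma_add_one _ hs₀, norm_mul,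
      norm_mul, show (s + 1 + 1).re = c + 2 by simp only [add_re, hre, one_re]; ring] at h
  have hs : 1 + t ^ 2 ≤ ‖s‖ ^ 2 := by
    rw [← normSq_eq_norm_sq, normSq_apply, hre, him]; nlinarith
  have hs' : ‖s‖ ≤ ‖s + 1‖ := by
    rw [← sq_le_sq₀ (norm_nonneg _) (norm_nonneg _), ← normSq_eq_norm_sq, ← normSq_eq_norm_sq,
      normSq_apply, normSq_apply]
    simp only [add_re, add_im, one_re, one_im, hre, him]; nlinarith
  rw [← div_eq_mul_inv, le_div_iff₀ (by positivity)]
  calc ‖Gamma s‖ * (1 + t ^ 2) ≤ ‖Gamma s‖ * (‖s‖ * ‖s‖) := by rw [← sq]; gcongr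
    _ ≤ ‖Gamma s‖ * (‖s + 1‖ * ‖s‖) := by gcongr
    _ ≤ Real.Gamma (c + 2) := by linarith

theorem verticalIntegrable_Gamma (hc : ∀ m : ℕ, c ≠ -m) : VerticalIntegrable Gamma c := by
  obtain ⟨n, hn⟩ : ∃ n : ℕ, 1 ≤ c + n := by
    obtain ⟨n, hn⟩ := exists_nat_ge (1 - c)
    exact ⟨n, by linarith⟩
  induction n generalizing c with
  | zero =>
    exact (integrable_inv_one_add_sq.const_mul (Real.Gamma (c + 2))).mono'
      (continuous_Gamma_comp (by fun_prop) fun t m hm ↦ hc m <| by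
        simpa using congrArg re hm).aestronglyMeasurable
      (.of_forall (norm_Gamma_vertical_le (by simpa using hn)))
  | succ n ih =>
    have hc₀ : c ≠ 0 := by simpa using hc 0
    have hne (t : ℝ) : (c + t * I : ℂ) ≠ 0 := ne_of_apply_ne re (by simpa using hc₀)
    have hshift : VerticalIntegrable Gamma (c + 1) :=
      ih (fun m hm ↦ hc (m + 1) (by push_cast; linarith)) (by push_cast at hn; linarith)
    have hbound (t : ℝ) : ‖(c + t * I : ℂ)⁻¹‖ ≤ |c|⁻¹ := by
      rw [norm_inv]
      gcongr
      simpa using abs_re_le_norm (c + t * I : ℂ)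
    refine (Integrable.bdd_mul hshift (by fun_prop) (.of_forall hbound)).congr
      (.of_forall fun t ↦ ?_)
    simp only [show ((c + 1 : ℝ) + t * I : ℂ) = c + t * I + 1 by push_cast; ring,
      Gamma_add_one _ (hne t), inv_mul_cancel_left₀ (hne t)]

theorem verticalIntegrable_add_pow_mul_Gamma (hc : ∀ m : ℕ, c ≠ -m) (b : ℂ) (n : ℕ) :
    VerticalIntegrable (fun u ↦ (b + u) ^ n * Gamma u) c := by
  induction n generalizing b c with
  | zero => simpa using verticalIntegrable_Gamma hc
  | succ n ih =>
    have hne (t : ℝ) : (c + t * I : ℂ) ≠ 0 :=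
      ne_of_apply_ne re (by simpa using hc 0)
    have hc' (m : ℕ) : c + 1 ≠ -m := fun hm ↦ hc (m + 1) (by push_cast; linarith)
    have h := verticalIntegrable_comp_add_one.2 (ih hc' (b - 1))
    refine (((ih hc b).const_mul b).add h).congr (.of_forall fun t ↦ ?_)
    simp only [Pi.add_apply, Gamma_add_one _ (hne t)]
    ring

theorem mellinInv_Gamma_of_pos (hc : 0 < c) (hx : 0 < x) : mellinInv c Gamma x = cexp (-x) := by
  have hconv (s : ℂ) (hs : 0 < s.re) : MellinConvergent (fun y : ℝ ↦ cexp (-y)) s := by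
    refine (GammaIntegral_convergent hs).congr_fun (fun y _ ↦ ?_) measurableSet_Ioi
    simp [mul_comm]
  have hmellin (t : ℝ) : mellin (fun y : ℝ ↦ cexp (-y)) (c + t * I) = Gamma (c + t * I) := by
    rw [Gamma_eq_integral (by simpa using hc), GammaIntegral_eq_mellin]
    simp
  have hΓ : VerticalIntegrable Gamma c :=
    verticalIntegrable_Gamma fun m ↦ by linarith [m.cast_nonneg (α := ℝ)]
  rw [← mellinInv_congr hmellin]
  exact mellinInv_mellin_eq c _ hx (hconv c (by simpa using hc))
    (hΓ.congr (.of_forall fun t ↦ (hmellin t).symm)) (by fun_prop)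

-- Both sides have derivative `-exp (-x)` and tend to `0` at `0`.
theorem mellinInv_Gamma_of_neg (hc : -1 < c) (hc' : c < 0) (hx : 0 < x) :
    mellinInv c Gamma x = cexp (-x) - 1 := by
  have hpole := ne_neg_natCast_of_neg_one_lt_of_neg hc hc'
  have hne (t : ℝ) : (c + t * I : ℂ) ≠ 0 := ne_of_apply_ne re (by simpa using hc'.ne)
  have hderiv (y : ℝ) (hy : 0 < y) :
      HasDerivAt (fun y ↦ mellinInv c Gamma y - cexp (-y)) 0 y := by
    have hΓ' : mellinInv c (fun u ↦ u • Gamma u) y = y * cexp (-y) := by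
      rw [← mellinInv_Gamma_of_pos (c := c + 1) (by linarith) hy, ← smul_eq_mul,
        ← mellinInv_comp_add_one hy]
      exact mellinInv_congr fun t ↦ (Gamma_add_one _ (hne t)).symm
    have h := hasDerivAt_mellinInv hy (verticalIntegrable_Gamma hpole)
      (by simpa using verticalIntegrable_add_pow_mul_Gamma hpole 0 1)
    have hexp : HasDerivAt (fun y : ℝ ↦ cexp (-y)) (-cexp (-y)) y := by
      simpa using (hasDerivAt_neg (y : ℂ)).cexp.comp_ofReal
    refine (h.sub hexp).congr_deriv ?_
    rw [hΓ', smul_eq_mul]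
    field_simp [ofReal_ne_zero.2 hy.ne']
    ring
  obtain ⟨a, ha⟩ := isOpen_Ioi.exists_is_const_of_deriv_eq_zero (convex_Ioi (0 : ℝ)).isPreconnected
    (fun y hy ↦ (hderiv y hy).differentiableAt.differentiableWithinAt)
    fun y hy ↦ (hderiv y hy).deriv
  have hlim : Tendsto (fun y ↦ mellinInv c Gamma y - cexp (-y)) (𝓝[>] 0) (𝓝 (0 - 1)) := by
    refine (tendsto_mellinInv_nhdsGT_zero hc').sub ?_
    have : Tendsto (fun y : ℝ ↦ cexp (-y)) (𝓝 0) (𝓝 (cexp (-(0 : ℝ)))) :=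
      Continuous.tendsto (by fun_prop) _
    simpa using this.mono_left nhdsWithin_le_nhds
  have ha' : a = 0 - 1 := tendsto_nhds_unique
    (tendsto_const_nhds.congr' (eventually_mem_nhdsWithin.mono fun y hy ↦ (ha y hy).symm)) hlim
  linear_combination ha x hx + ha'

end Gamma

section PowerSeries

variable {ι : Type*} {a : ι → ℂ} {e : ι → ℕ} {f : ℝ → ℂ}

theorem summable_norm_mul_pow (hf : ∀ x : ℝ, 0 < x → HasSum (fun i ↦ a i * (x : ℂ) ^ e i) (f x))
    {x : ℝ} (hx : 0 < x) : Summable fun i ↦ ‖a i‖ * x ^ e i := by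
  simpa [abs_of_pos hx] using (hf x hx).summable.norm

theorem mul_natCast_mul_pow_sub_one {R : Type*} [CommSemiring R] (n : ℕ) (y : R) :
    y * (n * y ^ (n - 1)) = n * y ^ n := by
  rcases n with _ | n
  · simp
  · rw [Nat.add_sub_cancel, pow_succ']; ring

theorem hasSum_natCast_mul_pow_of_hasDerivAt
    (hf : ∀ x : ℝ, 0 < x → HasSum (fun i ↦ a i * (x : ℂ) ^ e i) (f x))
    {x : ℝ} (hx : 0 < x) {f' : ℂ} (hf' : HasDerivAt f f' x) :
    HasSum (fun i ↦ e i * a i * (x : ℂ) ^ e i) (x * f') := by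
  have hterm (i : ι) (y : ℝ) : HasDerivAt (fun y : ℝ ↦ a i * (y : ℂ) ^ e i)
      (a i * (e i * (y : ℂ) ^ (e i - 1))) y := by
    simpa using ((hasDerivAt_id (y : ℂ)).pow (e i)).comp_ofReal.const_mul (a i)
  have hle (i : ι) {y : ℝ} (hy : y ∈ Ioo (x / 2) (2 * x)) :
      ‖a i * (e i * (y : ℂ) ^ (e i - 1))‖ ≤ (x / 2)⁻¹ * (‖a i‖ * (4 * x) ^ e i) := by
    have hy₀ : 0 < y := by linarith [hy.1]
    simp only [norm_mul, norm_pow, norm_natCast, norm_real, Real.norm_of_nonneg hy₀.le]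
    rw [inv_mul_eq_div, le_div_iff₀ (by positivity)]
    calc ‖a i‖ * (e i * y ^ (e i - 1)) * (x / 2)
        ≤ ‖a i‖ * (e i * y ^ (e i - 1)) * y := by gcongr; exact hy.1.le
      _ = ‖a i‖ * (e i * y ^ e i) := by rw [← mul_natCast_mul_pow_sub_one]; ring
      _ ≤ ‖a i‖ * (2 ^ e i * (2 * x) ^ e i) := by
        gcongr
        · exact_mod_cast Nat.lt_two_pow_self.le
        · exact hy.2.le
      _ = ‖a i‖ * (4 * x) ^ e i := by rw [← mul_pow]; ring_nf
  have hxmem : x ∈ Ioo (x / 2) (2 * x) := ⟨by linarith, by linarith⟩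
  have hu := (summable_norm_mul_pow hf (x := 4 * x) (by positivity)).mul_left (x / 2)⁻¹
  have hderiv := hasDerivAt_tsum_of_isPreconnected hu isOpen_Ioo isPreconnected_Ioo
    (fun i y _ ↦ hterm i y) (fun i y hy ↦ hle i hy) hxmem (hf x hx).summable hxmem
  have heq : f =ᶠ[𝓝 x] fun y ↦ ∑' i, a i * (y : ℂ) ^ e i :=
    (eventually_gt_nhds hx).mono fun y hy ↦ (hf y hy).tsum_eq.symm
  rw [hf'.unique (hderiv.congr_of_eventuallyEq heq), ← tsum_mul_left]
  have hsum : Summable fun i ↦ (x : ℂ) * (a i * (e i * (x : ℂ) ^ (e i - 1))) :=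
    (Summable.of_norm_bounded hu fun i ↦ hle i hxmem).mul_left _
  exact hsum.hasSum.congr_fun fun i ↦ by rw [mul_left_comm, mul_natCast_mul_pow_sub_one]; ring

end PowerSeries

section EulerIntegral

theorem Gamma_div_Gamma_add {s γ : ℂ} (hs : 0 < s.re) (hγ : 0 < γ.re) :
    Gamma s / Gamma (s + γ) = (Gamma γ)⁻¹ * betaIntegral s γ := by
  rw [betaIntegral_eq_Gamma_mul_div s γ hs hγ]
  field_simp [Gamma_ne_zero_of_re_pos hγ]

theorem norm_betaIntegrand (s γ : ℂ) {t : ℝ} (ht : 0 < t) :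
    ‖(t : ℂ) ^ (s - 1) * (1 - t : ℂ) ^ (γ - 1)‖ =
      ‖(t : ℂ) ^ ((s.re : ℂ) - 1) * (1 - t : ℂ) ^ (γ - 1)‖ := by
  simp [norm_cpow_eq_rpow_re_of_pos ht]

theorem norm_Gamma_div_Gamma_add_le {s γ : ℂ} (hs : 0 < s.re) (hγ : 0 < γ.re) :
    ‖Gamma s / Gamma (s + γ)‖ ≤ ‖(Gamma γ)⁻¹‖ *
      ∫ t in (0 : ℝ)..1, ‖(t : ℂ) ^ ((s.re : ℂ) - 1) * (1 - t : ℂ) ^ (γ - 1)‖ := by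
  rw [Gamma_div_Gamma_add hs hγ, norm_mul, betaIntegral]
  gcongr
  refine (intervalIntegral.norm_integral_le_integral_norm zero_le_one).trans_eq ?_
  exact intervalIntegral.integral_congr_uIoo fun t ht ↦ norm_betaIntegrand s γ (by simpa using ht.1)

/-- The Erdélyi–Kober fractional integral on `(0, ∞)`, normalised so that it multiplies `z ^ v` by
`Γ(α + v) / Γ(α + γ + v)`. -/
noncomputable def erdelyiKober (α γ : ℂ) (f : ℝ → ℂ) (z : ℝ) : ℂ :=
  (Gamma γ)⁻¹ * ∫ t in (0 : ℝ)..1, (t : ℂ) ^ (α - 1) * (1 - t : ℂ) ^ (γ - 1) * f (z * t)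

theorem betaIntegrand_mul_pow (α γ a : ℂ) (n : ℕ) (z : ℝ) {t : ℝ} (ht : 0 < t) :
    (t : ℂ) ^ (α - 1) * (1 - t : ℂ) ^ (γ - 1) * (a * ((z * t : ℝ) : ℂ) ^ n) =
      a * (z : ℂ) ^ n * ((t : ℂ) ^ (α + n - 1) * (1 - t : ℂ) ^ (γ - 1)) := by
  rw [add_sub_right_comm, cpow_add _ _ (ofReal_ne_zero.2 ht.ne'), cpow_natCast, ofReal_mul,
    mul_pow]
  ring

theorem erdelyiKober_const_mul_pow {α γ : ℂ} {n : ℕ} (hα : 0 < (α + n).re) (hγ : 0 < γ.re)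
    (a : ℂ) (z : ℝ) :
    erdelyiKober α γ (fun x ↦ a * (x : ℂ) ^ n) z =
      a * (Gamma (α + n) / Gamma (α + γ + n)) * (z : ℂ) ^ n := by
  rw [erdelyiKober, intervalIntegral.integral_congr_uIoo fun t ht ↦
      betaIntegrand_mul_pow α γ a n z (by simpa using ht.1), intervalIntegral.integral_const_mul,
    add_right_comm, Gamma_div_Gamma_add hα hγ, betaIntegral]
  ring

theorem hasSum_erdelyiKober {ι : Type*} [Countable ι] {a : ι → ℂ} {e : ι → ℕ} {f : ℝ → ℂ}
    (hf : ∀ x : ℝ, 0 < x → HasSum (fun i ↦ a i * (x : ℂ) ^ e i) (f x)) {α γ : ℂ} {δ : ℝ}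
    (hδ : 0 < δ) (hα : ∀ i, δ ≤ α.re + e i) (hγ : 0 < γ.re) {z : ℝ} (hz : 0 < z) :
    HasSum (fun i ↦ a i * (Gamma (α + e i) / Gamma (α + γ + e i)) * (z : ℂ) ^ e i)
      (erdelyiKober α γ f z) := by
  have hmem {t : ℝ} (ht : t ∈ uIoc (0 : ℝ) 1) : t ∈ Ioc 0 1 := by
    rwa [uIoc_of_le zero_le_one] at ht
  have hbound (i : ι) {t : ℝ} (ht : t ∈ Ioc (0 : ℝ) 1) :
      ‖(t : ℂ) ^ (α - 1) * (1 - t : ℂ) ^ (γ - 1) * (a i * ((z * t : ℝ) : ℂ) ^ e i)‖ ≤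
        ‖a i‖ * z ^ e i * ‖(t : ℂ) ^ ((δ : ℂ) - 1) * (1 - t : ℂ) ^ (γ - 1)‖ := by
    have hpow : t ^ (α.re + e i - 1) ≤ t ^ (δ - 1) :=
      Real.rpow_le_rpow_of_exponent_ge ht.1 ht.2 (by linarith [hα i])
    rw [betaIntegrand_mul_pow _ _ _ _ _ ht.1]
    simp only [norm_mul, norm_pow, norm_real, Real.norm_of_nonneg hz.le,
      norm_cpow_eq_rpow_re_of_pos ht.1, sub_re, add_re, natCast_re, ofReal_re, one_re]
    gcongr
  have h := intervalIntegral.hasSum_integral_of_dominated_convergence (μ := volume) _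
    (fun i ↦ (by fun_prop : Measurable _).aestronglyMeasurable)
    (fun i ↦ .of_forall fun t ht ↦ hbound i (hmem ht))
    (.of_forall fun t _ ↦ (summable_norm_mul_pow hf hz).mul_right _)
    (by simpa only [tsum_mul_right] using
      (betaIntegral_convergent (u := δ) (by simpa) hγ).norm.const_mul _)
    (.of_forall fun t ht ↦ (hf (z * t) (mul_pos hz (hmem ht).1)).mul_left _)
  exact (h.mul_left (Gamma γ)⁻¹).congr_fun fun i ↦
    (erdelyiKober_const_mul_pow (by simpa using hδ.trans_le (hα i)) hγ _ _).symm

theorem integrable_betaIntegrand_mul {c : ℝ} {α γ : ℂ} (hc : c < α.re) (hγ : 0 < γ.re) {G : ℝ → ℂ}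
    (hG : Integrable G) :
    Integrable (Function.uncurry fun t y : ℝ ↦
      (t : ℂ) ^ (α - (c + y * I) - 1) * (1 - t : ℂ) ^ (γ - 1) * G y)
      ((volume.restrict (uIoc 0 1)).prod volume) := by
  have hβ := (intervalIntegrable_iff.1 (betaIntegral_convergent (u := (α.re - c : ℝ))
    (by simpa) hγ)).mul_prod hG
  refine hβ.mono (.mul (by fun_prop : Measurable _).aestronglyMeasurable hG.1.comp_snd) ?_
  have hpos : ∀ᵐ t ∂volume.restrict (uIoc (0 : ℝ) 1), 0 < t :=
    ae_restrict_of_forall_mem measurableSet_uIoc fun t ht ↦ by simpa using ht.1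
  filter_upwards [Measure.quasiMeasurePreserving_fst.ae hpos] with ⟨t, y⟩ ht
  rw [Function.uncurry_apply_pair, norm_mul, norm_betaIntegrand _ _ ht, norm_mul]
  simp

theorem verticalIntegrable_Gamma_div_Gamma_mul {F : ℂ → ℂ} {c : ℝ} (hF : VerticalIntegrable F c)
    {α γ : ℂ} (hc : c < α.re) (hγ : 0 < γ.re) :
    VerticalIntegrable (fun u ↦ Gamma (α - u) / Gamma (α + γ - u) * F u) c := by
  have hre (t : ℝ) : (α - (c + t * I)).re = α.re - c := by simp
  have hpos (t : ℝ) : 0 < (α - (c + t * I)).re := by rw [hre]; linarith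
  have hpos' (t : ℝ) : 0 < (α + γ - (c + t * I)).re := by
    rw [add_sub_right_comm, add_re]; linarith [hpos t]
  have hpole {s : ℂ} (hs : 0 < s.re) (m : ℕ) : s ≠ -m := by
    rintro rfl
    linarith [show (-(m : ℂ)).re ≤ 0 by simp]
  have hcont : Continuous fun t : ℝ ↦ Gamma (α - (c + t * I)) / Gamma (α + γ - (c + t * I)) :=
    (continuous_Gamma_comp (by fun_prop) fun t ↦ hpole (hpos t)).div
      (continuous_Gamma_comp (by fun_prop) fun t ↦ hpole (hpos' t))
      fun t ↦ Gamma_ne_zero_of_re_pos (hpos' t)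
  have hbound (t : ℝ) := norm_Gamma_div_Gamma_add_le (hpos t) hγ
  simp only [hre, ← add_sub_right_comm] at hbound
  exact Integrable.bdd_mul hF hcont.aestronglyMeasurable (.of_forall hbound)

theorem mellinInv_Gamma_div_Gamma_mul {F : ℂ → ℂ} {c : ℝ} (hF : VerticalIntegrable F c) {α γ : ℂ}
    (hc : c < α.re) (hγ : 0 < γ.re) {z : ℝ} (hz : 0 < z) :
    mellinInv c (fun u ↦ Gamma (α - u) / Gamma (α + γ - u) * F u) z =
      erdelyiKober α γ (mellinInv c F) z := by
  have hG : Integrable fun y : ℝ ↦ (z : ℂ) ^ (-(c + y * I) : ℂ) * F (c + y * I) :=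
    integrable_cpow_neg_smul hz hF
  have hkernel (y t : ℝ) (ht : 0 < t) :
      (t : ℂ) ^ (α - 1) * (1 - t : ℂ) ^ (γ - 1) *
          (((z * t : ℝ) : ℂ) ^ (-(c + y * I) : ℂ) * F (c + y * I)) =
        (t : ℂ) ^ (α - (c + y * I) - 1) * (1 - t : ℂ) ^ (γ - 1) *
          ((z : ℂ) ^ (-(c + y * I) : ℂ) * F (c + y * I)) := by
    rw [ofReal_mul, mul_cpow_ofReal_nonneg hz.le ht.le,
      show α - (c + y * I) - 1 = α - 1 + -(c + y * I) by ring,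
      cpow_add _ _ (ofReal_ne_zero.2 ht.ne')]
    ring
  have hbeta (y : ℝ) : (z : ℂ) ^ (-(c + y * I) : ℂ) *
      (Gamma (α - (c + y * I)) / Gamma (α + γ - (c + y * I)) * F (c + y * I)) =
      (Gamma γ)⁻¹ * ∫ t in (0 : ℝ)..1, (t : ℂ) ^ (α - (c + y * I) - 1) * (1 - t : ℂ) ^ (γ - 1) *
        ((z : ℂ) ^ (-(c + y * I) : ℂ) * F (c + y * I)) := by
    rw [intervalIntegral.integral_mul_const, ← betaIntegral, ← mul_assoc (Gamma γ)⁻¹,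
      ← Gamma_div_Gamma_add (by simpa using hc) hγ, sub_add_eq_add_sub]
    ring
  have hinner (t : ℝ) (ht : 0 < t) :
      ∫ y : ℝ, (t : ℂ) ^ (α - (c + y * I) - 1) * (1 - t : ℂ) ^ (γ - 1) *
          ((z : ℂ) ^ (-(c + y * I) : ℂ) * F (c + y * I)) =
        (t : ℂ) ^ (α - 1) * (1 - t : ℂ) ^ (γ - 1) *
          ∫ y : ℝ, ((z * t : ℝ) : ℂ) ^ (-(c + y * I) : ℂ) * F (c + y * I) := by
    rw [← integral_const_mul]
    exact integral_congr_ae (.of_forall fun y ↦ (hkernel y t ht).symm)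
  simp only [erdelyiKober, mellinInv, smul_eq_mul, hbeta, mul_smul_comm,
    intervalIntegral.integral_smul]
  rw [integral_const_mul,
    ← intervalIntegral_integral_swap (integrable_betaIntegrand_mul hc hγ hG),
    intervalIntegral.integral_congr_uIoo fun t ht ↦ hinner t (by simpa using ht.1)]

end EulerIntegral

section MasterFormula

/-- Ramanujan's master formula for `φ` on the line `Re u = c`: the inverse Mellin transform of
`Γ(u) φ(-u)` is the sum of the residues `(-1) ^ j / j! * φ(j) * z ^ j` at the poles `u = -j` of `Γ`.
The pole at `0` is left out, because the lines of interest lie between `-1` and `0`.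
Integrability is required with all powers of `u`, so that `φ` may be multiplied by polynomials. -/
structure HasMasterFormula (c : ℝ) (φ : ℂ → ℂ) : Prop where
  verticalIntegrable (n : ℕ) : VerticalIntegrable (fun u ↦ u ^ n * (Gamma u * φ (-u))) c
  hasSum {z : ℝ} (hz : 0 < z) :
    HasSum (fun j : ℕ ↦ (-1) ^ (j + 1) / (j + 1).factorial * φ (j + 1 : ℕ) * (z : ℂ) ^ (j + 1))
      (mellinInv c (fun u ↦ Gamma u * φ (-u)) z)

namespace HasMasterFormula

variable {c : ℝ} {φ : ℂ → ℂ}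

theorem one (hc : -1 < c) (hc' : c < 0) : HasMasterFormula c fun _ ↦ 1 where
  verticalIntegrable n := by
    simpa using
      verticalIntegrable_add_pow_mul_Gamma (ne_neg_natCast_of_neg_one_lt_of_neg hc hc') 0 n
  hasSum {z} hz := by
    have h := NormedSpace.expSeries_div_hasSum_exp (-z : ℂ)
    rw [← exp_eq_exp_ℂ, ← hasSum_nat_add_iff' 1] at h
    simp only [mul_one, mellinInv_Gamma_of_neg hc hc' hz]
    simpa using h.congr_fun fun j ↦ by rw [neg_pow (z : ℂ)]; ring

theorem linear_mul (h : HasMasterFormula c φ) (b : ℂ) :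
    HasMasterFormula c fun v ↦ (b + v) * φ v where
  verticalIntegrable n :=
    (((h.verticalIntegrable n).const_mul b).sub (h.verticalIntegrable (n + 1))).congr
      (.of_forall fun t ↦ by simp only [Pi.sub_apply]; ring)
  hasSum {z} hz := by
    have hφ : VerticalIntegrable (fun u ↦ Gamma u * φ (-u)) c := by
      simpa using h.verticalIntegrable 0
    have hφ' : VerticalIntegrable (fun u ↦ u • (Gamma u * φ (-u))) c := by
      simpa using h.verticalIntegrable 1
    have hbφ : VerticalIntegrable (fun u ↦ b • (Gamma u * φ (-u))) c := hφ.const_mul b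
    have hEuler := hasSum_natCast_mul_pow_of_hasDerivAt (fun _ hx ↦ h.hasSum hx) hz
      (hasDerivAt_mellinInv hz hφ hφ')
    have heq : mellinInv c (fun u ↦ Gamma u * ((b + -u) * φ (-u))) z =
        b * mellinInv c (fun u ↦ Gamma u * φ (-u)) z +
          z * (-(z : ℂ)⁻¹ • mellinInv c (fun u ↦ u • (Gamma u * φ (-u))) z) := by
      rw [smul_eq_mul, neg_mul, mul_neg, mul_inv_cancel_left₀ (ofReal_ne_zero.2 hz.ne'),
        ← sub_eq_add_neg, ← smul_eq_mul b, ← mellinInv_const_smul, ← mellinInv_sub hz hbφ hφ']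
      exact mellinInv_congr fun t ↦ by simp only [smul_eq_mul]; ring
    rw [heq]
    exact (((h.hasSum hz).mul_left b).add hEuler).congr_fun fun j ↦ by ring

theorem Gamma_div_Gamma_mul (h : HasMasterFormula c φ) {α γ : ℂ} (hα : -1 < α.re) (hc : c < α.re)
    (hγ : 0 < γ.re) :
    HasMasterFormula c fun v ↦ Gamma (α + v) / Gamma (α + γ + v) * φ v where
  verticalIntegrable n := by
    refine (verticalIntegrable_Gamma_div_Gamma_mul (h.verticalIntegrable n) hc hγ).congr
      (.of_forall fun t ↦ ?_)
    simp only [← sub_eq_add_neg]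
    ring
  hasSum {z} hz := by
    have hφ : VerticalIntegrable (fun u ↦ Gamma u * φ (-u)) c := by
      simpa using h.verticalIntegrable 0
    have hEuler := hasSum_erdelyiKober (fun _ hx ↦ h.hasSum hx) (α := α) (δ := α.re + 1)
      (by linarith) (fun j ↦ by push_cast; linarith [j.cast_nonneg (α := ℝ)]) hγ hz
    rw [← mellinInv_Gamma_div_Gamma_mul hφ hc hγ hz] at hEuler
    simp only [sub_eq_add_neg] at hEuler
    convert hEuler.congr_fun fun j ↦ ?_ using 1
    · exact mellinInv_congr fun t ↦ by ring
    · ring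

theorem Gamma_div_Gamma {α : ℂ} (hc : -1 < c) (hc' : c < 0) (hα : c < α.re) (β : ℂ) :
    HasMasterFormula c fun v ↦ Gamma (α + v) / Gamma (β + v) := by
  obtain ⟨n, hn⟩ := exists_nat_gt (α.re - β.re)
  induction n generalizing β with
  | zero =>
    have h := (one hc hc').Gamma_div_Gamma_mul (hc.trans hα) hα
      (γ := β - α) (by simpa using hn)
    simpa using h
  | succ n ih =>
    have h := (ih (β + 1) (by rw [add_re, one_re]; push_cast at hn; linarith)).linear_mul β
    convert h using 2 with v
    rw [div_eq_mul_inv, one_div_Gamma_eq_self_mul_one_div_Gamma_add_one]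
    ring_nf

end HasMasterFormula

end MasterFormula

theorem mellinInv_Gamma_mul_Gamma_div_Gamma {α β : ℂ} (hα : α ≠ 0) (hβ : ∀ m : ℕ, β ≠ -m) {c : ℝ}
    (hc : -1 < c) (hc' : c < 0) (hcα : c < α.re) {z : ℝ} (hz : 0 < z) :
    mellinInv c (fun u ↦ Gamma u * (Gamma (α - u) / Gamma (β - u))) z =
      Gamma α / Gamma β * (oneF1 α β (-z) - 1) := by
  have hα' (m : ℕ) : α ≠ -m := by
    rintro rfl
    rcases m with _ | m
    · simp at hα
    · rw [neg_re, natCast_re, Nat.cast_add_one] at hcα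
      linarith [m.cast_nonneg (α := ℝ)]
  have h := (HasMasterFormula.Gamma_div_Gamma hc hc' hcα β).hasSum hz
  simp only [← sub_eq_add_neg] at h
  have hterm (j : ℕ) : ((ascPochhammer ℂ j).eval α / (ascPochhammer ℂ j).eval β) * (-z : ℂ) ^ j /
      j.factorial = Gamma β / Gamma α *
        ((-1) ^ j / j.factorial * (Gamma (α + j) / Gamma (β + j)) * (z : ℂ) ^ j) := by
    rw [← Gamma_add_nat_div_Gamma_eq α hα', ← Gamma_add_nat_div_Gamma_eq β hβ, neg_pow]
    field_simp
  have hseries : HasSum (fun j : ℕ ↦ ((ascPochhammer ℂ j).eval α / (ascPochhammer ℂ j).eval β) *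
      (-z : ℂ) ^ j / j.factorial)
      (Gamma β / Gamma α *
        mellinInv c (fun u ↦ Gamma u * (Gamma (α - u) / Gamma (β - u))) z + 1) := by
    rw [← hasSum_nat_add_iff' 1]
    simpa using (h.mul_left (Gamma β / Gamma α)).congr_fun fun j ↦ hterm (j + 1)
  rw [oneF1, hseries.tsum_eq]
  field_simp [Gamma_ne_zero hα', Gamma_ne_zero hβ]
  ring

theorem inv_ofReal_cpow_neg {X : ℝ} (hX : 0 ≤ X) (s : ℂ) :
    ((X⁻¹ : ℝ) : ℂ) ^ (-s) = (X : ℂ) ^ s := by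
  have harg : arg X ≠ Real.pi := by simpa [arg_ofReal_of_nonneg hX] using Real.pi_ne_zero.symm
  rw [ofReal_inv, cpow_neg, inv_cpow _ _ harg, inv_inv]

theorem barnes_integral_shifted_eq_oneF1_sub_one_general {α β : ℂ} (hα : α ≠ 0)
    (hβ : ∀ m : ℕ, β ≠ -m) {X : ℝ} (hX : 0 < X) {d : ℝ} (hd₀ : 0 < d) (hd : α.re < d)
    (hd' : d < α.re + 1) :
    Integrable (fun t : ℝ ↦ Gamma (d + t * I) * Gamma (α - (d + t * I)) /
      Gamma (β - α + (d + t * I)) * (X : ℂ) ^ (-(d + t * I) : ℂ)) ∧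
    1 / (2 * Real.pi) * ∫ t : ℝ, Gamma (d + t * I) * Gamma (α - (d + t * I)) /
        Gamma (β - α + (d + t * I)) * (X : ℂ) ^ (-(d + t * I) : ℂ) =
      Gamma α / Gamma β * (X : ℂ) ^ (-α) * (oneF1 α β (-1 / X) - 1) := by
  let F : ℂ → ℂ := fun u ↦ Gamma u * (Gamma (α - u) / Gamma (β - u))
  let c : ℝ := α.re - d
  have hc : -1 < c := by linarith
  have hc' : c < 0 := by linarith
  have hcα : c < α.re := by linarith
  have hint : VerticalIntegrable F c := by
    simpa only [pow_zero, one_mul, ← sub_eq_add_neg] using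
      (HasMasterFormula.Gamma_div_Gamma hc hc' hcα β).verticalIntegrable 0
  have hmellin : mellinInv c F X⁻¹ = Gamma α / Gamma β * (oneF1 α β (-1 / X) - 1) := by
    rw [mellinInv_Gamma_mul_Gamma_div_Gamma hα hβ hc hc' hcα (inv_pos.2 hX), ofReal_inv, neg_div,
      one_div]
  have hsubst (t : ℝ) : Gamma (d + t * I) * Gamma (α - (d + t * I)) /
      Gamma (β - α + (d + t * I)) * (X : ℂ) ^ (-(d + t * I) : ℂ) =
        (X : ℂ) ^ (-α) * (((X⁻¹ : ℝ) : ℂ) ^ (-(c + (α.im - t : ℝ) * I) : ℂ) *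
          F (c + (α.im - t : ℝ) * I)) := by
    have hu : (c + (α.im - t : ℝ) * I : ℂ) = α - (d + t * I) := by
      simp [c, Complex.ext_iff]
    rw [hu, inv_ofReal_cpow_neg hX.le, show -(d + t * I : ℂ) = -α + (α - (d + t * I)) by ring,
      cpow_add _ _ (ofReal_ne_zero.2 hX.ne')]
    simp only [F, sub_sub_cancel, show β - (α - (d + t * I)) = β - α + (d + t * I) by ring]
    ring
  simp only [hsubst]
  constructor
  · exact ((integrable_cpow_neg_smul (inv_pos.2 hX) hint).comp_sub_left α.im).const_mul _
  · rw [integral_const_mul, integral_sub_left_eq_self fun y : ℝ ↦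
      ((X⁻¹ : ℝ) : ℂ) ^ (-(c + y * I) : ℂ) * F (c + y * I), mul_right_comm, ← hmellin, mellinInv]
    simp only [smul_eq_mul, real_smul]
    push_cast
    ring

end

theorem barnes_integral_shifted_eq_oneF1_sub_one (k : ℝ) (hk : 1 ≤ k)
    (a : ℕ) (ha : a = 0 ∨ a = 1) (X : ℝ) (hX : 0 < X)
    (d : ℝ) (hd : (k + 1) / 2 < d) (hd' : d < k / 2 + 1) :
    MeasureTheory.Integrable (fun t : ℝ =>
      Complex.Gamma ((d : ℂ) + t * I) *
        Complex.Gamma (((k : ℂ) + a) / 2 - ((d : ℂ) + t * I)) /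
        Complex.Gamma ((1 + (a : ℂ) - k) / 2 + ((d : ℂ) + t * I)) *
        (X : ℂ) ^ (-((d : ℂ) + t * I))) ∧
    (1 / (2 * Real.pi)) * ∫ t : ℝ,
        Complex.Gamma ((d : ℂ) + t * I) *
          Complex.Gamma (((k : ℂ) + a) / 2 - ((d : ℂ) + t * I)) /
          Complex.Gamma ((1 + (a : ℂ) - k) / 2 + ((d : ℂ) + t * I)) *
          (X : ℂ) ^ (-((d : ℂ) + t * I)) =
      Complex.Gamma (((k : ℂ) + a) / 2) / Complex.Gamma ((a : ℂ) + 1 / 2) *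
        (X : ℂ) ^ (-(((k : ℂ) + a) / 2)) *
        (oneF1 (((k : ℂ) + a) / 2) ((a : ℂ) + 1 / 2) (-1 / X) - 1) := by
  have hre (x y : ℝ) : (((x : ℂ) + y) / 2).re = (x + y) / 2 := by simp [← ofReal_add]
  have hα : (((k : ℂ) + a) / 2).re = (k + a) / 2 := mod_cast hre k a
  have ha₀ : (0 : ℝ) ≤ a := a.cast_nonneg
  have ha₁ : (a : ℝ) ≤ 1 := by rcases ha with rfl | rfl <;> norm_num
  have hαne : ((k : ℂ) + a) / 2 ≠ 0 := ne_of_apply_ne re (by rw [hα, zero_re]; positivity)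
  have hβne (m : ℕ) : (a : ℂ) + 1 / 2 ≠ -m := fun h ↦ by
    have hm : (a : ℝ) + 1 / 2 = -m := by simpa using congrArg re h
    linarith [m.cast_nonneg (α := ℝ)]
  have h := barnes_integral_shifted_eq_oneF1_sub_one_general hαne hβne hX
    (d := d) (by linarith) (by linarith) (by linarith)
  rwa [show (a : ℂ) + 1 / 2 - (k + a) / 2 = (1 + a - k) / 2 by ring] at h
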